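/- (F. & M. Riesz theorem) If μ is a finite complex Borel measure on the unit circle 𝕋 such that ∫ e^{-ikθ} dμ(e^{iθ}) = 0 for every negative integer k, then μ is absolutely continuous with respect to Lebesgue arc length measure on 𝕋. -/

import Mathlib

open MeasureTheory Complex

/-- The integral of a function against a complex measure, defined via the Jordan
decompositions of the real and imaginary parts. -/
noncomputable def cmIntegral {α : Type*} [MeasurableSpace α]
    (μ : MeasureTheory.ComplexMeasure α) (f : α → ℂ) : ℂ :=
  ((∫ x, f x ∂μ.re.toJordanDecomposition.posPart)
      - ∫ x, f x ∂μ.re.toJordanDecomposition.negPart)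
    + Complex.I * ((∫ x, f x ∂μ.im.toJordanDecomposition.posPart)
      - ∫ x, f x ∂μ.im.toJordanDecomposition.negPart)

namespace FMR
open Filter Topology

/-- The closed (disk) algebra generated by `fourier 1`. -/
noncomputable def diskAlg : Subalgebra ℂ C(AddCircle (1 : ℝ), ℂ) :=
  (Algebra.adjoin ℂ {(fourier 1 : C(AddCircle (1 : ℝ), ℂ))}).topologicalClosure

lemma diskAlg_closed : IsClosed (diskAlg : Set C(AddCircle (1 : ℝ), ℂ)) :=
  Subalgebra.isClosed_topologicalClosure _

lemma fourier_one_mem : (fourier 1 : C(AddCircle (1 : ℝ), ℂ)) ∈ diskAlg :=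
  Subalgebra.le_topologicalClosure _ (Algebra.subset_adjoin rfl)

lemma hasSum_mem {f : ℕ → C(AddCircle (1 : ℝ), ℂ)} {g} (h : HasSum f g)
    (hf : ∀ n, f n ∈ diskAlg) : g ∈ diskAlg :=
  diskAlg_closed.mem_of_tendsto h (Eventually.of_forall fun _ => sum_mem fun n _ => hf n)

lemma exists_exp (f : C(AddCircle (1 : ℝ), ℂ)) (hf : f ∈ diskAlg) :
    ∃ g ∈ diskAlg, ∀ x, g x = Complex.exp (f x) := by
  have h := NormedSpace.exp_series_hasSum_exp' (𝕂 := ℂ) f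
  refine ⟨NormedSpace.exp f, hasSum_mem h fun n => ?_, fun x => ?_⟩
  · exact diskAlg.smul_mem (diskAlg.pow_mem hf n) _
  · have h1 := (ContinuousMap.evalCLM ℂ x).hasSum h
    have h2 := NormedSpace.exp_series_hasSum_exp' (𝕂 := ℂ) (f x)
    rw [← Complex.exp_eq_exp_ℂ] at h2
    refine h1.unique ?_
    exact h2

lemma exists_kernel (a : AddCircle (1 : ℝ)) {δ : ℝ} (hδ : 0 < δ) :
    ∃ g ∈ diskAlg, ∀ x, g x = ((1 + δ : ℂ) - fourier 1 x * (starRingEnd ℂ) (fourier 1 a))⁻¹ := by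
  have hd : (1 + δ : ℂ) ≠ 0 := by
    have : (1 + δ) ≠ 0 := by positivity
    exact_mod_cast this
  set c : ℂ := (starRingEnd ℂ) (fourier 1 a) / (1 + δ) with hc
  have ha : ‖(fourier 1 a : ℂ)‖ = 1 := Circle.norm_coe _
  have hcn : ‖c‖ < 1 := by
    rw [hc, norm_div, RCLike.norm_conj, ha]
    have : ‖(1 + δ : ℂ)‖ = 1 + δ := by
      have := Complex.norm_of_nonneg (r := 1 + δ) (by positivity)
      push_cast at this; exact this
    rw [this, div_lt_one (by positivity)]; linarith
  set w : C(AddCircle (1 : ℝ), ℂ) := c • fourier 1 with hw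
  have hwn : ‖w‖ < 1 := by rw [hw, norm_smul, fourier_norm, mul_one]; exact hcn
  have hs := (summable_geometric_of_norm_lt_one hwn).hasSum
  have hm : (∑' i : ℕ, w ^ i) ∈ diskAlg :=
    hasSum_mem hs fun n => diskAlg.pow_mem (diskAlg.smul_mem fourier_one_mem _) _
  refine ⟨(1 + δ : ℂ)⁻¹ • (∑' i : ℕ, w ^ i), diskAlg.smul_mem hm _, fun x => ?_⟩
  have h1 := congrArg (fun f : C(AddCircle (1 : ℝ), ℂ) => f x) (mul_neg_geom_series w hwn)
  simp only [ContinuousMap.mul_apply, ContinuousMap.sub_apply, ContinuousMap.one_apply] at h1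
  rw [ContinuousMap.smul_apply, smul_eq_mul]
  refine eq_inv_of_mul_eq_one_right ?_
  have h2 : (1 + δ : ℂ) - fourier 1 x * (starRingEnd ℂ) (fourier 1 a) = (1 + δ) * (1 - w x) := by
    rw [hw, ContinuousMap.smul_apply, smul_eq_mul, hc]
    field_simp
  rw [h2]
  calc _ = ((1 + δ : ℂ) * (1 + δ : ℂ)⁻¹) * ((1 - w x) * (∑' i : ℕ, w ^ i : C(AddCircle (1 : ℝ), ℂ)) x) := by
        ring
    _ = 1 := by rw [h1, mul_inv_cancel₀ hd, one_mul]

lemma exists_cover {K : Set (AddCircle (1 : ℝ))} (hK : IsCompact K) (h0 : volume K = 0)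
    {ε : ℝ} (hε : 0 < ε) : ∃ δ > 0, ∃ u : Finset (AddCircle (1 : ℝ)), (∀ b ∈ u, b ∈ K) ∧
      (∀ x ∈ K, ∃ b ∈ u, dist x b ≤ 5 * δ) ∧ u.card * δ ≤ ε := by
  have ht := tendsto_measure_cthickening_of_isCompact (μ := volume) hK
  rw [h0] at ht
  have h1 : ∀ᶠ r in 𝓝 (0 : ℝ), volume (Metric.cthickening r K) < ENNReal.ofReal ε :=
    ht.eventually_lt_const (by simpa using hε)
  have h2 : ∀ᶠ r in 𝓝[>] (0 : ℝ), volume (Metric.cthickening r K) < ENNReal.ofReal ε :=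
    h1.filter_mono nhdsWithin_le_nhds
  have h3 : ∀ᶠ r in 𝓝[>] (0 : ℝ), r ∈ Set.Ioo (0 : ℝ) (1 / 2) :=
    Ioo_mem_nhdsGT (by norm_num)
  obtain ⟨δ, hv, hδ, hδ2⟩ := (h2.and h3).exists
  obtain ⟨t, htK, htf, hcov⟩ := hK.finite_cover_balls hδ
  obtain ⟨u, hut, hdisj, hcov2⟩ := Vitali.exists_disjoint_subfamily_covering_enlargement_closedBall
    t id (fun _ => δ) δ (fun _ _ => le_rfl) 5 (by norm_num)
  have huf := htf.subset hut
  refine ⟨δ, hδ, huf.toFinset, fun b hb => htK (hut (by simpa using hb)), fun x hx => ?_, ?_⟩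
  · obtain ⟨a, ha, hxa⟩ := Set.mem_iUnion₂.1 (hcov hx)
    obtain ⟨b, hb, hab⟩ := hcov2 a ha
    exact ⟨b, by simpa using hb, hab (Metric.ball_subset_closedBall hxa)⟩
  · have hvol : volume (⋃ b ∈ huf.toFinset, Metric.closedBall b δ)
        = ∑ b ∈ huf.toFinset, volume (Metric.closedBall b δ) := by
      refine measure_biUnion_finset ?_ fun b _ => measurableSet_closedBall
      simpa using hdisj
    have hle : volume (⋃ b ∈ huf.toFinset, Metric.closedBall b δ)
        ≤ volume (Metric.cthickening δ K) := by
      refine measure_mono (Set.iUnion₂_subset fun b hb => ?_)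
      exact Metric.closedBall_subset_cthickening (htK (hut (by simpa using hb))) δ
    rw [hvol] at hle
    simp only [AddCircle.volume_closedBall, Finset.sum_const, nsmul_eq_mul] at hle
    have h4 := hle.trans hv.le
    rw [← ENNReal.ofReal_natCast, ← ENNReal.ofReal_mul (by positivity),
      ENNReal.ofReal_le_ofReal_iff hε.le, min_eq_right (by linarith)] at h4
    have : (0 : ℝ) ≤ huf.toFinset.card * δ := by positivity
    nlinarith

lemma norm_fourier_sub (x a : AddCircle (1 : ℝ)) :
    ‖(fourier 1 x : ℂ) - fourier 1 a‖ ≤ 7 * dist x a := by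
  have h1 : (fourier 1 x : ℂ) - fourier 1 a = fourier 1 a * (fourier 1 (x - a) - 1) := by
    have : (fourier 1 x : ℂ) = fourier 1 a * fourier 1 (x - a) := by
      simp only [fourier_apply, one_smul, ← Circle.coe_mul, ← AddCircle.toCircle_add]
      rw [add_sub_cancel]
    rw [this]; ring
  have ha : ‖(fourier 1 a : ℂ)‖ = 1 := Circle.norm_coe _
  rw [h1, norm_mul, ha, one_mul, dist_eq_norm]
  generalize x - a = y
  induction y using QuotientAddGroup.induction_on with | H t => ?_
  have h2 : ((t : ℝ) : AddCircle (1 : ℝ)) = ((t - round t : ℝ) : AddCircle (1 : ℝ)) := by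
    rw [AddCircle.coe_sub]
    have : ((round t : ℝ) : AddCircle (1 : ℝ)) = 0 := by
      rw [AddCircle.coe_eq_zero_iff]; exact ⟨round t, by simp⟩
    rw [this, sub_zero]
  have h3 : ‖((t : ℝ) : AddCircle (1 : ℝ))‖ = |t - round t| := UnitAddCircle.norm_eq
  have h4 : (fourier 1 ((t : ℝ) : AddCircle (1 : ℝ)) : ℂ)
      = Complex.exp (I * ((2 * Real.pi * (t - round t) : ℝ) : ℂ)) := by
    rw [h2, fourier_coe_apply]; congr 1; push_cast; ring
  change ‖(fourier 1 ((t : ℝ) : AddCircle (1 : ℝ)) : ℂ) - 1‖ ≤ 7 * ‖((t : ℝ) : AddCircle (1 : ℝ))‖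
  rw [h3, h4]
  refine Real.norm_exp_I_mul_ofReal_sub_one_le.trans ?_
  rw [norm_mul, Real.norm_eq_abs, Real.norm_eq_abs, abs_of_pos Real.two_pi_pos]
  have := Real.pi_lt_d2
  gcongr
  linarith

lemma kernel_re {w : ℂ} (hw : ‖w‖ = 1) {δ : ℝ} (hδ : 0 < δ) :
    0 ≤ (((1 + δ : ℂ) - w)⁻¹).re := by
  have : w.re ≤ 1 := hw ▸ Complex.re_le_norm w
  rw [Complex.inv_re]
  refine div_nonneg ?_ (Complex.normSq_nonneg _)
  simp; linarith

lemma kernel_re_lower {w : ℂ} (hw : ‖w‖ = 1) {δ : ℝ} (hδ : 0 < δ) (h : ‖1 - w‖ ≤ 35 * δ) :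
    1 / 1296 ≤ δ * (((1 + δ : ℂ) - w)⁻¹).re := by
  have h1 : w.re ≤ 1 := hw ▸ Complex.re_le_norm w
  have h2 : ‖(1 + δ : ℂ) - w‖ ≤ 36 * δ := by
    calc ‖(1 + δ : ℂ) - w‖ = ‖(1 - w) + δ‖ := by ring_nf
      _ ≤ ‖1 - w‖ + ‖(δ : ℂ)‖ := norm_add_le _ _
      _ ≤ 36 * δ := by rw [Complex.norm_of_nonneg hδ.le]; linarith
  have h3 : δ ≤ ((1 + δ : ℂ) - w).re := by simp; linarith
  rw [Complex.inv_re, Complex.normSq_eq_norm_sq]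
  have h4 : 0 < ‖(1 + δ : ℂ) - w‖ := lt_of_lt_of_le hδ (h3.trans (Complex.re_le_norm _))
  rw [← mul_div_assoc, div_le_div_iff₀ (by norm_num) (by positivity)]
  have h5 : ‖(1 + δ : ℂ) - w‖ ^ 2 ≤ (36 * δ) ^ 2 := by gcongr
  nlinarith

lemma kernel_norm {w : ℂ} (hw : ‖w‖ = 1) {δ : ℝ} (hδ : 0 < δ) (h : 0 < ‖1 - w‖) :
    ‖((1 + δ : ℂ) - w)⁻¹‖ ≤ ‖1 - w‖⁻¹ := by
  rw [norm_inv]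
  refine inv_anti₀ h ?_
  refine le_of_sq_le_sq ?_ (norm_nonneg _)
  have h1 : w.re ≤ 1 := hw ▸ Complex.re_le_norm w
  rw [← Complex.normSq_eq_norm_sq, ← Complex.normSq_eq_norm_sq, Complex.normSq_apply,
    Complex.normSq_apply]
  simp
  nlinarith

lemma exists_peak_aux {K : Set (AddCircle (1 : ℝ))} (hK : IsCompact K) (h0 : volume K = 0)
    (n : ℕ) : ∃ F ∈ diskAlg, (∀ x, ‖F x‖ ≤ 1) ∧ (∀ x ∈ K, ‖F x‖ ≤ Real.exp (-(n / 1296))) ∧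
      ∀ x, ∀ d > 0, (∀ b ∈ K, d ≤ ‖(fourier 1 x : ℂ) - fourier 1 b‖) →
        ∃ z : ℂ, F x = Complex.exp z ∧ ‖z‖ ≤ (1 / (n + 1)) * d⁻¹ := by
  obtain ⟨δ, hδ, u, huK, hcov, hcard⟩ := exists_cover hK h0 (ε := 1 / (n + 1) ^ 2) (by positivity)
  choose g hg hgx using fun a => exists_kernel a hδ
  obtain ⟨F, hF, hFx⟩ := exists_exp (-((n * δ : ℂ) • ∑ a ∈ u, g a))
    (neg_mem (diskAlg.smul_mem (sum_mem fun a _ => hg a) _))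
  have hnF : ∀ x : AddCircle (1 : ℝ), ‖(fourier 1 x : ℂ)‖ = 1 := fun x => Circle.norm_coe _
  have hw : ∀ x a : AddCircle (1 : ℝ),
      ‖(fourier 1 x : ℂ) * (starRingEnd ℂ) (fourier 1 a)‖ = 1 := fun x a => by
    rw [norm_mul, RCLike.norm_conj, hnF, hnF, one_mul]
  have hd : ∀ x a : AddCircle (1 : ℝ),
      ‖1 - (fourier 1 x : ℂ) * (starRingEnd ℂ) (fourier 1 a)‖
        = ‖(fourier 1 x : ℂ) - fourier 1 a‖ := fun x a => by
    have h1 : (fourier 1 a : ℂ) * (starRingEnd ℂ) (fourier 1 a) = 1 := by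
      rw [Complex.mul_conj, Complex.normSq_eq_norm_sq, hnF]; simp
    rw [← h1, ← sub_mul, norm_mul, RCLike.norm_conj, hnF, mul_one, norm_sub_rev]
  have hval : ∀ x, (-((n * δ : ℂ) • ∑ a ∈ u, g a)) x = -((n * δ : ℝ) * ∑ a ∈ u, g a x) := by
    intro x
    simp
  have hre : ∀ x, ((-((n * δ : ℂ) • ∑ a ∈ u, g a)) x).re
      = -(n * ∑ a ∈ u, δ * (g a x).re) := by
    intro x
    rw [hval, Complex.neg_re, Complex.re_ofReal_mul, Complex.re_sum, ← Finset.mul_sum, mul_assoc]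
  have hpos : ∀ x a, 0 ≤ δ * (g a x).re := fun x a => by
    rw [hgx]; exact mul_nonneg hδ.le (kernel_re (hw x a) hδ)
  refine ⟨F, hF, fun x => ?_, fun x hx => ?_, fun x d hd0 hxd => ?_⟩
  · rw [hFx, Complex.norm_exp, Real.exp_le_one_iff, hre, neg_nonpos]
    exact mul_nonneg (Nat.cast_nonneg _) (Finset.sum_nonneg fun a _ => hpos x a)
  · rw [hFx, Complex.norm_exp, Real.exp_le_exp, hre, neg_le_neg_iff]
    obtain ⟨b, hb, hxb⟩ := hcov x hx
    have h1 : 1 / 1296 ≤ δ * (g b x).re := by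
      rw [hgx]
      refine kernel_re_lower (hw x b) hδ ?_
      rw [hd]
      linarith [norm_fourier_sub x b]
    have h2 := Finset.single_le_sum (f := fun a => δ * (g a x).re) (fun a _ => hpos x a) hb
    have h3 : 1 / 1296 ≤ ∑ a ∈ u, δ * (g a x).re := h1.trans h2
    calc (n : ℝ) / 1296 = n * (1 / 1296) := by ring
      _ ≤ _ := by gcongr
  · refine ⟨_, hFx x, ?_⟩
    rw [hval, norm_neg, norm_mul, Complex.norm_of_nonneg (by positivity)]
    have h1 : ‖∑ a ∈ u, g a x‖ ≤ u.card * d⁻¹ := by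
      refine (norm_sum_le _ _).trans ?_
      rw [← nsmul_eq_mul]
      refine Finset.sum_le_card_nsmul _ _ _ fun a ha => ?_
      have h2 := hxd a (huK a ha)
      rw [hgx]
      refine (kernel_norm (hw x a) hδ ?_).trans ?_
      · rw [hd]; linarith
      · rw [hd]; exact inv_anti₀ hd0 h2
    calc (n * δ : ℝ) * ‖∑ a ∈ u, g a x‖ ≤ (n * δ) * (u.card * d⁻¹) := by gcongr
      _ = n * (u.card * δ) * d⁻¹ := by ring
      _ ≤ (n + 1) * (1 / (n + 1) ^ 2) * d⁻¹ := by gcongr; linarith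
      _ = (1 / (n + 1)) * d⁻¹ := by field_simp

lemma exists_peak {K : Set (AddCircle (1 : ℝ))} (hK : IsCompact K) (h0 : volume K = 0) :
    ∃ F : ℕ → C(AddCircle (1 : ℝ), ℂ), (∀ n, F n ∈ diskAlg) ∧ (∀ n x, ‖F n x‖ ≤ 1) ∧
      (∀ x ∈ K, Tendsto (fun n => F n x) atTop (𝓝 0)) ∧
      (∀ x ∉ K, Tendsto (fun n => F n x) atTop (𝓝 1)) := by
  choose F hF h1 h2 h3 using exists_peak_aux hK h0
  refine ⟨F, hF, h1, fun x hx => ?_, fun x hx => ?_⟩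
  · refine squeeze_zero_norm (fun n => h2 n x hx) ?_
    refine Real.tendsto_exp_neg_atTop_nhds_zero.comp ?_
    exact tendsto_natCast_atTop_atTop.atTop_div_const (by norm_num)
  · obtain ⟨d, hd0, hd⟩ : ∃ d > 0, ∀ b ∈ K, d ≤ ‖(fourier 1 x : ℂ) - fourier 1 b‖ := by
      rcases K.eq_empty_or_nonempty with rfl | hne
      · exact ⟨1, one_pos, by simp⟩
      · obtain ⟨b, hb, hmin⟩ := hK.exists_isMinOn hne
          (f := fun b => ‖(fourier 1 x : ℂ) - fourier 1 b‖) (by fun_prop)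
        refine ⟨_, ?_, hmin⟩
        rw [gt_iff_lt, norm_pos_iff, sub_ne_zero]
        intro h
        simp only [fourier_apply, one_smul] at h
        have := AddCircle.injective_toCircle one_ne_zero (Subtype.ext h)
        exact hx (this ▸ hb)
    choose z hz hzn using fun n => h3 n x d hd0 hd
    have hz0 : Tendsto z atTop (𝓝 0) := by
      refine squeeze_zero_norm hzn ?_
      simpa using tendsto_one_div_add_atTop_nhds_zero_nat.mul_const d⁻¹
    have := (Complex.continuous_exp.tendsto 0).comp hz0
    rw [Complex.exp_zero] at this
    exact this.congr fun n => (hz n).symm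

/-- The annihilation property extends from the exponentials to the disk algebra. -/
lemma annihilate {ν : Measure (AddCircle (1 : ℝ))} {h : AddCircle (1 : ℝ) → ℂ}
    (hhi : Integrable h ν)
    (hz : ∀ n : ℕ, ∫ x, (fourier (n + 1 : ℤ) x : ℂ) * h x ∂ν = 0)
    {f : C(AddCircle (1 : ℝ), ℂ)} (hf : f ∈ diskAlg) :
    ∫ x, f x * ((fourier 1 x : ℂ) * h x) ∂ν = 0 := by
  set k : AddCircle (1 : ℝ) → ℂ := fun x => (fourier 1 x : ℂ) * h x with hk
  have hk1 : Integrable k ν := hhi.bdd_mul (c := 1)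
    (by fun_prop) (Eventually.of_forall fun x => (Circle.norm_coe _).le)
  have hfk : ∀ f : C(AddCircle (1 : ℝ), ℂ), Integrable (fun x => f x * k x) ν := fun f =>
    hk1.bdd_mul (c := ‖f‖) (by fun_prop) (Eventually.of_forall fun x => f.norm_coe_le_norm x)
  let L0 : C(AddCircle (1 : ℝ), ℂ) →ₗ[ℂ] ℂ :=
    { toFun := fun f => ∫ x, f x * k x ∂ν
      map_add' := fun f g => by
        rw [← integral_add (hfk f) (hfk g)]
        simp only [ContinuousMap.add_apply, add_mul]
      map_smul' := fun c f => by
        rw [RingHom.id_apply, smul_eq_mul, ← integral_const_mul]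
        simp only [ContinuousMap.smul_apply, smul_eq_mul, mul_assoc] }
  let L : C(AddCircle (1 : ℝ), ℂ) →L[ℂ] ℂ := L0.mkContinuous (∫ x, ‖k x‖ ∂ν) fun f => by
    change ‖∫ x, f x * k x ∂ν‖ ≤ _
    refine (norm_integral_le_integral_norm _).trans ?_
    rw [← integral_mul_const]
    refine integral_mono (hfk f).norm (hk1.norm.mul_const _) fun x => ?_
    simp only [norm_mul]
    rw [mul_comm]
    gcongr
    exact f.norm_coe_le_norm x
  have hcl : IsClosed {f | L f = 0} := isClosed_eq L.continuous continuous_const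
  have hsub : ((Algebra.adjoin ℂ {(fourier 1 : C(AddCircle (1 : ℝ), ℂ))}) :
      Set C(AddCircle (1 : ℝ), ℂ)) ⊆ {f | L f = 0} := by
    intro f hf
    rw [SetLike.mem_coe, Algebra.adjoin_singleton_eq_range_aeval] at hf
    obtain ⟨p, rfl⟩ := hf
    change L (Polynomial.aeval _ p) = 0
    rw [Polynomial.aeval_eq_sum_range, map_sum]
    refine Finset.sum_eq_zero fun n _ => ?_
    rw [map_smul]
    have : L (fourier 1 ^ n) = 0 := by
      rw [← hz n]
      change ∫ x, ((fourier 1 : C(AddCircle (1 : ℝ), ℂ)) ^ n) x * k x ∂ν = _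
      congr 1
      ext x
      rw [hk, ContinuousMap.pow_apply, fourier_add]
      have : (fourier 1 x : ℂ) ^ n = fourier (n : ℤ) x := by
        simp [fourier_apply, AddCircle.toCircle_nsmul]
      simp only [this]
      ring
    rw [this, smul_zero]
  exact (closure_minimal hsub hcl) hf

lemma main {ν : Measure (AddCircle (1 : ℝ))} [IsFiniteMeasure ν] {h : AddCircle (1 : ℝ) → ℂ}
    (hm : Measurable h) (hhi : Integrable h ν)
    (hz : ∀ n : ℕ, ∫ x, (fourier (n + 1 : ℤ) x : ℂ) * h x ∂ν = 0)
    {E : Set (AddCircle (1 : ℝ))} (hE : MeasurableSet E) (hE0 : volume E = 0) :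
    ∫ x in E, h x ∂ν = 0 := by
  set k : AddCircle (1 : ℝ) → ℂ := fun x => (fourier 1 x : ℂ) * h x with hk
  have hk1 : Integrable k ν := hhi.bdd_mul (c := 1)
    (by fun_prop) (Eventually.of_forall fun x => (Circle.norm_coe _).le)
  -- integrals over compact null sets vanish
  have hcomp : ∀ K : Set (AddCircle (1 : ℝ)), IsCompact K → volume K = 0 →
      ∫ x in K, k x ∂ν = 0 := by
    intro K hK h0
    obtain ⟨F, hF, hF1, hF2, hF3⟩ := exists_peak hK h0
    have ht : Tendsto (fun n => ∫ x, (1 - F n) x * k x ∂ν) atTop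
        (𝓝 (∫ x, K.indicator k x ∂ν)) := by
      refine tendsto_integral_of_dominated_convergence (fun x => 2 * ‖k x‖) (fun n => ?_)
        (hk1.norm.const_mul 2) (fun n => Eventually.of_forall fun x => ?_)
        (Eventually.of_forall fun x => ?_)
      · exact (map_continuous (1 - F n)).aestronglyMeasurable.mul hk1.aestronglyMeasurable
      · rw [norm_mul]
        gcongr
        refine (norm_sub_le _ _).trans ?_
        have := hF1 n x
        simp only [ContinuousMap.one_apply, norm_one]
        linarith
      · by_cases hx : x ∈ K
        · rw [Set.indicator_of_mem hx]
          simpa using ((hF2 x hx).const_sub 1).mul_const (k x)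
        · rw [Set.indicator_of_notMem hx]
          simpa using ((hF3 x hx).const_sub 1).mul_const (k x)
    rw [integral_indicator hK.measurableSet] at ht
    have hzero : ∀ n, ∫ x, (1 - F n) x * k x ∂ν = 0 := fun n =>
      annihilate hhi hz (sub_mem (one_mem _) (hF n))
    simp only [hzero] at ht
    exact (tendsto_nhds_unique ht tendsto_const_nhds)
  have hcomp2 : ∀ K : Set (AddCircle (1 : ℝ)), IsCompact K → volume K = 0 →
      k =ᵐ[ν.restrict K] 0 := by
    intro K hK h0
    refine ae_eq_zero_of_forall_setIntegral_isCompact_eq_zero hk1.restrict fun s hs => ?_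
    rw [Measure.restrict_restrict hs.measurableSet]
    exact hcomp _ (hs.inter hK) (measure_mono_null Set.inter_subset_right h0)
  have hkm : MeasurableSet (E ∩ {x | h x ≠ 0}) :=
    hE.inter (hm (measurableSet_singleton 0)).compl
  have hnull : ν (E ∩ {x | h x ≠ 0}) = 0 := by
    by_contra hne
    obtain ⟨K, hKs, hK, hKpos⟩ :=
      hkm.exists_lt_isCompact_of_ne_top (measure_ne_top ν _) (pos_iff_ne_zero.2 hne)
    have h1 := hcomp2 K hK (measure_mono_null (hKs.trans Set.inter_subset_left) hE0)
    rw [Filter.EventuallyEq, ae_restrict_iff' hK.measurableSet] at h1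
    have h2 : ∀ᵐ x ∂ν, x ∉ K := by
      filter_upwards [h1] with x hx hxK
      have h3 := hx hxK
      have h4 : (fourier 1 x : ℂ) ≠ 0 := Circle.coe_ne_zero _
      exact (hKs hxK).2 ((mul_eq_zero.1 h3).resolve_left h4)
    have : ν K = 0 := by simpa [ae_iff] using h2
    exact hKpos.ne' this
  refine setIntegral_eq_zero_of_ae_eq_zero ?_
  have : ∀ᵐ x ∂ν, x ∉ E ∩ {x | h x ≠ 0} := measure_eq_zero_iff_ae_notMem.1 hnull
  filter_upwards [this] with x hx hxE
  by_contra hne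
  exact hx ⟨hxE, hne⟩

lemma key {α : Type*} [MeasurableSpace α] (p ν : Measure α) [IsFiniteMeasure p]
    [IsFiniteMeasure ν] (hp : p ≪ ν) (f : α → ℂ) :
    ∫ x, f x * (((p.rnDeriv ν x).toReal : ℝ) : ℂ) ∂ν = ∫ x, f x ∂p := by
  rw [← integral_rnDeriv_smul hp]
  congr 1; ext x
  rw [Complex.real_smul, mul_comm]

end FMR

/-- **The F. & M. Riesz theorem.** If `μ` is a finite complex Borel measure on the
circle (modelled as `AddCircle 1`) whose Fourier coefficients `μ̂(k)` vanish for all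
`k < 0`, then `μ` is absolutely continuous with respect to arc length measure. -/
theorem fm_riesz (μ : MeasureTheory.ComplexMeasure (AddCircle (1 : ℝ)))
    (hμ : ∀ k : ℤ, k < 0 → cmIntegral μ (fun x => (fourier (-k) x : ℂ)) = 0) :
    μ ≪ᵥ (volume : Measure (AddCircle (1 : ℝ))).toENNRealVectorMeasure := by
  refine VectorMeasure.AbsolutelyContinuous.mk fun E hE hE0 => ?_
  rw [Measure.toENNRealVectorMeasure_apply_measurable hE] at hE0
  set p1 := μ.re.toJordanDecomposition.posPart with hp1
  set p2 := μ.re.toJordanDecomposition.negPart with hp2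
  set p3 := μ.im.toJordanDecomposition.posPart with hp3
  set p4 := μ.im.toJordanDecomposition.negPart with hp4
  set ν := p1 + p2 + p3 + p4 with hν
  have a1 : p1 ≪ ν := (Measure.le_add_right (Measure.le_add_right
    (Measure.le_add_right le_rfl))).absolutelyContinuous
  have a2 : p2 ≪ ν := (Measure.le_add_right (Measure.le_add_right
    (Measure.le_add_left le_rfl))).absolutelyContinuous
  have a3 : p3 ≪ ν := (Measure.le_add_right (Measure.le_add_left le_rfl)).absolutelyContinuous
  have a4 : p4 ≪ ν := (Measure.le_add_left le_rfl).absolutelyContinuous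
  let r : Measure (AddCircle (1 : ℝ)) → AddCircle (1 : ℝ) → ℂ :=
    fun p x => (((p.rnDeriv ν x).toReal : ℝ) : ℂ)
  have hrm : ∀ p, Measurable (r p) := fun p =>
    Complex.measurable_ofReal.comp (Measure.measurable_rnDeriv p ν).ennreal_toReal
  have hri : ∀ p : Measure (AddCircle (1 : ℝ)), IsFiniteMeasure p → Integrable (r p) ν :=
    fun p _ => Measure.integrable_toReal_rnDeriv.ofReal
  have key : ∀ p : Measure (AddCircle (1 : ℝ)), IsFiniteMeasure p → p ≪ ν →
      ∀ f : AddCircle (1 : ℝ) → ℂ, ∫ x, f x * r p x ∂ν = ∫ x, f x ∂p := by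
    exact fun p hpf hp f => FMR.key p ν hp f
  let h : AddCircle (1 : ℝ) → ℂ := fun x => (r p1 x - r p2 x) + I * (r p3 x - r p4 x)
  have hm : Measurable h := ((hrm p1).sub (hrm p2)).add (((hrm p3).sub (hrm p4)).const_mul I)
  have hhi : Integrable h ν := ((hri p1 inferInstance).sub (hri p2 inferInstance)).add
    (((hri p3 inferInstance).sub (hri p4 inferInstance)).const_mul I)
  have hrep : ∀ f : AddCircle (1 : ℝ) → ℂ, Measurable f → (∀ x, ‖f x‖ ≤ 1) →
      ∫ x, f x * h x ∂ν = cmIntegral μ f := by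
    intro f hf hf1
    have hi : ∀ p : Measure (AddCircle (1 : ℝ)), IsFiniteMeasure p →
        Integrable (fun x => f x * r p x) ν := fun p hp =>
      (hri p hp).bdd_mul (c := 1) hf.aestronglyMeasurable (Filter.Eventually.of_forall hf1)
    have i1 := hi p1 inferInstance
    have i2 := hi p2 inferInstance
    have i3 := hi p3 inferInstance
    have i4 := hi p4 inferInstance
    have e : (fun x => f x * h x) = fun x => (f x * r p1 x - f x * r p2 x)
        + I * (f x * r p3 x - f x * r p4 x) := by
      ext x; simp only [h]; ring
    rw [e, integral_add (f := fun x => f x * r p1 x - f x * r p2 x)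
        (g := fun x => I * (f x * r p3 x - f x * r p4 x)) (i1.sub i2) ((i3.sub i4).const_mul I), integral_sub i1 i2,
      integral_const_mul, integral_sub i3 i4, key p1 inferInstance a1, key p2 inferInstance a2,
      key p3 inferInstance a3, key p4 inferInstance a4]
    rfl
  have hz : ∀ n : ℕ, ∫ x, (fourier (n + 1 : ℤ) x : ℂ) * h x ∂ν = 0 := by
    intro n
    rw [hrep (fun x => fourier (n + 1 : ℤ) x) (by fun_prop) (fun x => (Circle.norm_coe _).le)]
    have := hμ (-(n + 1 : ℤ)) (by omega)
    rwa [neg_neg] at this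
  have hfin := FMR.main hm hhi hz hE hE0
  have hE1 : ∫ x in E, h x ∂ν = cmIntegral μ (E.indicator 1) := by
    rw [← hrep _ (measurable_one.indicator hE) (fun x => ?_), ← integral_indicator hE]
    · congr 1; ext x
      by_cases hx : x ∈ E <;> simp [hx]
    · by_cases hx : x ∈ E <;> simp [hx]
  rw [hfin] at hE1
  have hi : ∀ p : Measure (AddCircle (1 : ℝ)), IsFiniteMeasure p →
      ∫ x, E.indicator (1 : AddCircle (1 : ℝ) → ℂ) x ∂p = (p.real E : ℂ) := by
    intro p _
    rw [integral_indicator hE]; simp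
  have hval : μ E = cmIntegral μ (E.indicator 1) := by
    unfold cmIntegral
    rw [← hp1, ← hp2, ← hp3, ← hp4, hi p1 inferInstance, hi p2 inferInstance,
      hi p3 inferInstance, hi p4 inferInstance]
    have q1 := μ.re.apply_eq_posPart_real_sub_negPart_real hE
    have q2 := μ.im.apply_eq_posPart_real_sub_negPart_real hE
    rw [← hp1, ← hp2] at q1
    rw [← hp3, ← hp4] at q2
    rw [← Complex.ofReal_sub, ← Complex.ofReal_sub, ← q1, ← q2, mul_comm]
    exact (Complex.re_add_im (μ E)).symm
  rw [hval, ← hE1]
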